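/- arXiv:math/0506272 — 2 statements merged into one kernel-verified Lean document; each statement's English description precedes it below -/
import Mathlib

section
/- Let H be a quasi-Hopf algebra, B a right H-comodule algebra, and v : H → B a morphism of right H-comodule algebras. Define E : B → B by E(b) = v(q¹)b₍₀₎v(βS(q²b₍₁₎)), set A = E(B) and h▷b = E(v(h)b). Then for all a ∈ A and h ∈ H: v(h)a = (h₁▷a)v(h₂) in B. -/
open TensorProduct BigOperators

/-- A quasi-bialgebra in the sense of Drinfeld. -/
structure QuasiBialgebra (k H : Type*) [Field k] [Ring H] [Algebra k H] where
  comul : H →ₐ[k] H ⊗[k] H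
  counit : H →ₐ[k] k
  Phi : H ⊗[k] (H ⊗[k] H)
  PhiInv : H ⊗[k] (H ⊗[k] H)
  Phi_mul_inv : Phi * PhiInv = 1
  inv_mul_Phi : PhiInv * Phi = 1
  comul_coassoc : ∀ h : H,
    (Algebra.TensorProduct.map (AlgHom.id k H) comul) (comul h)
      = Phi * (Algebra.TensorProduct.assoc k k k H H H)
          ((Algebra.TensorProduct.map comul (AlgHom.id k H)) (comul h)) * PhiInv
  counit_comul_right : ∀ h : H,
    (Algebra.TensorProduct.map (AlgHom.id k H) counit) (comul h) = h ⊗ₜ[k] (1 : k)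
  counit_comul_left : ∀ h : H,
    (Algebra.TensorProduct.map counit (AlgHom.id k H)) (comul h) = (1 : k) ⊗ₜ[k] h
  pentagon :
    ((1 : H) ⊗ₜ[k] Phi)
      * (Algebra.TensorProduct.map (AlgHom.id k H)
          (((Algebra.TensorProduct.assoc k k k H H H).toAlgHom).comp
            (Algebra.TensorProduct.map comul (AlgHom.id k H)))) Phi
      * (Algebra.TensorProduct.map (AlgHom.id k H)
          (Algebra.TensorProduct.map (AlgHom.id k H)
            (Algebra.TensorProduct.includeLeft : H →ₐ[k] H ⊗[k] H))) Phi
    = (Algebra.TensorProduct.map (AlgHom.id k H)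
          (Algebra.TensorProduct.map (AlgHom.id k H) comul)) Phi
      * (Algebra.TensorProduct.assoc k k k H H (H ⊗[k] H))
          ((Algebra.TensorProduct.map comul (AlgHom.id k (H ⊗[k] H))) Phi)
  counit_Phi : (Algebra.TensorProduct.map (AlgHom.id k H)
      (Algebra.TensorProduct.map counit (AlgHom.id k H))) Phi = 1

/-- A quasi-Hopf algebra: a quasi-bialgebra with antipode `S` (a bijective algebra
anti-automorphism with inverse `Sinv`) and elements `alpha`, `beta`, normalized so that
`counit alpha = counit beta = 1`.  Identities involving Sweedler components are stated
universally over all finite representations of the relevant tensors. -/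
structure QuasiHopfAlgebra (k H : Type*) [Field k] [Ring H] [Algebra k H] extends
    QuasiBialgebra k H where
  alpha : H
  beta : H
  S : H →ₗ[k] H
  Sinv : H →ₗ[k] H
  S_one : S 1 = 1
  S_mul : ∀ a b : H, S (a * b) = S b * S a
  Sinv_S : ∀ h : H, Sinv (S h) = h
  S_Sinv : ∀ h : H, S (Sinv h) = h
  antipode_left : ∀ h : H, ∀ (n : ℕ) (d1 d2 : Fin n → H),
    comul h = ∑ i, d1 i ⊗ₜ[k] d2 i →
    ∑ i, S (d1 i) * alpha * d2 i = counit h • alpha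
  antipode_right : ∀ h : H, ∀ (n : ℕ) (d1 d2 : Fin n → H),
    comul h = ∑ i, d1 i ⊗ₜ[k] d2 i →
    ∑ i, d1 i * beta * S (d2 i) = counit h • beta
  antipode_Phi : ∀ (n : ℕ) (X1 X2 X3 : Fin n → H),
    Phi = ∑ i, X1 i ⊗ₜ[k] (X2 i ⊗ₜ[k] X3 i) →
    ∑ i, X1 i * beta * S (X2 i) * alpha * X3 i = 1
  antipode_PhiInv : ∀ (n : ℕ) (x1 x2 x3 : Fin n → H),
    PhiInv = ∑ i, x1 i ⊗ₜ[k] (x2 i ⊗ₜ[k] x3 i) →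
    ∑ i, S (x1 i) * alpha * x2 i * beta * S (x3 i) = 1
  counit_alpha : counit alpha = 1
  counit_beta : counit beta = 1
/-- A right `H`-comodule algebra over a quasi-bialgebra `Q`. -/
structure RightComoduleAlgebra {k H : Type*} [Field k] [Ring H] [Algebra k H]
    (Q : QuasiBialgebra k H) (B : Type*) [Ring B] [Algebra k B] where
  coact : B →ₐ[k] B ⊗[k] H
  PhiRho : B ⊗[k] (H ⊗[k] H)
  PhiRhoInv : B ⊗[k] (H ⊗[k] H)
  PhiRho_mul_inv : PhiRho * PhiRhoInv = 1
  inv_mul_PhiRho : PhiRhoInv * PhiRho = 1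
  coact_coassoc : ∀ b : B,
    PhiRho * (Algebra.TensorProduct.assoc k k k B H H)
        ((Algebra.TensorProduct.map coact (AlgHom.id k H)) (coact b))
      = (Algebra.TensorProduct.map (AlgHom.id k B) Q.comul) (coact b) * PhiRho
  pentagon :
    ((1 : B) ⊗ₜ[k] Q.Phi)
      * (Algebra.TensorProduct.map (AlgHom.id k B)
          (((Algebra.TensorProduct.assoc k k k H H H).toAlgHom).comp
            (Algebra.TensorProduct.map Q.comul (AlgHom.id k H)))) PhiRho
      * (Algebra.TensorProduct.map (AlgHom.id k B)
          (Algebra.TensorProduct.map (AlgHom.id k H)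
            (Algebra.TensorProduct.includeLeft : H →ₐ[k] H ⊗[k] H))) PhiRho
    = (Algebra.TensorProduct.map (AlgHom.id k B)
          (Algebra.TensorProduct.map (AlgHom.id k H) Q.comul)) PhiRho
      * (Algebra.TensorProduct.assoc k k k B H (H ⊗[k] H))
          ((Algebra.TensorProduct.map coact (AlgHom.id k (H ⊗[k] H))) PhiRho)
  counit_coact : ∀ b : B,
    (Algebra.TensorProduct.map (AlgHom.id k B) Q.counit) (coact b) = b ⊗ₜ[k] (1 : k)
  counit_PhiRho_mid : (Algebra.TensorProduct.map (AlgHom.id k B)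
      (Algebra.TensorProduct.map Q.counit (AlgHom.id k H))) PhiRho = 1
  counit_PhiRho_right : (Algebra.TensorProduct.map (AlgHom.id k B)
      (Algebra.TensorProduct.map (AlgHom.id k H) Q.counit)) PhiRho = 1

/-- `v : H → B` is a morphism of right `H`-comodule algebras from `H` (with its canonical
right `H`-comodule algebra structure `ρ = Δ`, `Φ_ρ = Φ`) to `B`. -/
def IsComodAlgMorphismFromH {k H B : Type*} [Field k] [Ring H] [Algebra k H]
    [Ring B] [Algebra k B] {Q : QuasiBialgebra k H}
    (R : RightComoduleAlgebra Q B) (v : H →ₐ[k] B) : Prop :=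
  (∀ h : H, R.coact (v h) = (Algebra.TensorProduct.map v (AlgHom.id k H)) (Q.comul h))
  ∧ R.PhiRho = (Algebra.TensorProduct.map v (AlgHom.id k (H ⊗[k] H))) Q.Phi

/-- Characterization of the canonical projection `E : B → B`,
`E(b) = v(q¹) b₍₀₎ v(β S(q² b₍₁₎))`, where `q_R = q¹ ⊗ q² = X¹ ⊗ S⁻¹(α X³) X²`,
stated universally over finite representations of `Φ` and of `ρ(b)`. -/
def IsCanonicalProjection {k H B : Type*} [Field k] [Ring H] [Algebra k H]
    [Ring B] [Algebra k B] (Q : QuasiHopfAlgebra k H)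
    (R : RightComoduleAlgebra Q.toQuasiBialgebra B) (v : H →ₐ[k] B) (E : B →ₗ[k] B) : Prop :=
  ∀ (b : B) (n : ℕ) (X1 X2 X3 : Fin n → H),
    Q.Phi = ∑ i, X1 i ⊗ₜ[k] (X2 i ⊗ₜ[k] X3 i) →
    ∀ (p : ℕ) (b0 : Fin p → B) (b1 : Fin p → H),
      R.coact b = ∑ j, b0 j ⊗ₜ[k] b1 j →
      E b = ∑ i, ∑ j,
        v (X1 i) * b0 j * v (Q.beta * Q.S (Q.Sinv (Q.alpha * X3 i) * X2 i * b1 j))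

/-! Put `P(b) = b₍₀₎ v(β S(b₍₁₎))`, so that `E(b) = v(X¹) P(b) v(S(X²) α X³)`. Colinearity of `v`
gives `P(v(h)b) = v(h₁) P(b) v(S(h₂))`, and quasi-coassociativity in the form
`Φ (Δ ⊗ id)Δ(h) = (id ⊗ Δ)Δ(h) Φ` turns `E(v(h₁)b) v(h₂)` into
`v(h₁X¹) P(b) v(S(X²) S(h₂₍₁₎) α h₂₍₂₎ X³) = v(h) E(b)`. Moreover `P(b v(h)) = ε(h) P(b)`, hence
`E(b v(h)) = ε(h) E(b)`; the counit laws then collapse `E(E(b))` to `E(b)`. -/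

theorem exists_fin_sum_tmul {R M N : Type*} [CommSemiring R] [AddCommMonoid M] [Module R M]
    [AddCommMonoid N] [Module R N] (t : M ⊗[R] N) :
    ∃ (n : ℕ) (x : Fin n → M) (y : Fin n → N), t = ∑ i, x i ⊗ₜ[R] y i := by
  obtain ⟨s, rfl⟩ := TensorProduct.exists_finset t
  refine ⟨s.card, fun i ↦ (s.equivFin.symm i).1.1, fun i ↦ (s.equivFin.symm i).1.2, ?_⟩
  rw [← s.sum_coe_sort]
  exact (s.equivFin.symm.sum_comp fun p ↦ p.1.1 ⊗ₜ[R] p.1.2).symm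

theorem exists_fin_sum_tmul_tmul {R L M N : Type*} [CommSemiring R] [AddCommMonoid L] [Module R L]
    [AddCommMonoid M] [Module R M] [AddCommMonoid N] [Module R N] (t : L ⊗[R] (M ⊗[R] N)) :
    ∃ (n : ℕ) (x : Fin n → L) (y : Fin n → M) (z : Fin n → N),
      t = ∑ i, x i ⊗ₜ[R] (y i ⊗ₜ[R] z i) := by
  induction t with
  | zero => exact ⟨0, Fin.elim0, Fin.elim0, Fin.elim0, by simp⟩
  | tmul x u =>
    obtain ⟨n, y, z, rfl⟩ := exists_fin_sum_tmul u
    exact ⟨n, fun _ ↦ x, y, z, TensorProduct.tmul_sum _ _ _⟩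
  | add s t hs ht =>
    obtain ⟨m, x, y, z, rfl⟩ := hs
    obtain ⟨n, x', y', z', rfl⟩ := ht
    exact ⟨m + n, Fin.append x x', Fin.append y y', Fin.append z z', by simp [Fin.sum_univ_add]⟩

namespace QuasiBialgebra

variable {k H : Type*} [Field k] [Ring H] [Algebra k H] (Q : QuasiBialgebra k H)

/-- The algebra map `id ⊗ ε : A ⊗ H → A`, with the target `A ⊗ k` identified with `A`. -/
noncomputable def counitRight (A : Type*) [Ring A] [Algebra k A] : A ⊗[k] H →ₐ[k] A :=
  (Algebra.TensorProduct.rid k k A).toAlgHom.comp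
    (Algebra.TensorProduct.map (AlgHom.id k A) Q.counit)

@[simp]
theorem counitRight_tmul {A : Type*} [Ring A] [Algebra k A] (a : A) (h : H) :
    Q.counitRight A (a ⊗ₜ h) = Q.counit h • a := by
  simp [counitRight]

theorem counitRight_eq_of_map_counit_eq {A : Type*} [Ring A] [Algebra k A] {t : A ⊗[k] H} {a : A}
    (ht : Algebra.TensorProduct.map (AlgHom.id k A) Q.counit t = a ⊗ₜ[k] (1 : k)) :
    Q.counitRight A t = a := by
  simp [counitRight, ht]

theorem counitRight_comul (h : H) : Q.counitRight H (Q.comul h) = h :=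
  Q.counitRight_eq_of_map_counit_eq (Q.counit_comul_right h)

theorem counitRight_map_counitRight_Phi :
    Q.counitRight H (Algebra.TensorProduct.map (AlgHom.id k H) (Q.counitRight H) Q.Phi) = 1 := by
  have factor : (Q.counitRight H).comp
        (Algebra.TensorProduct.map (AlgHom.id k H) (Q.counitRight H)) =
      ((Q.counitRight H).comp (Algebra.TensorProduct.map (AlgHom.id k H)
        (Algebra.TensorProduct.lid k H).toAlgHom)).comp
      (Algebra.TensorProduct.map (AlgHom.id k H)
        (Algebra.TensorProduct.map Q.counit (AlgHom.id k H))) := by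
    ext <;> simp
  simpa [Q.counit_Phi] using DFunLike.congr_fun factor Q.Phi

theorem Phi_mul_assoc_map_comul (h : H) :
    Q.Phi * Algebra.TensorProduct.assoc k k k H H H
        (Algebra.TensorProduct.map Q.comul (AlgHom.id k H) (Q.comul h)) =
      Algebra.TensorProduct.map (AlgHom.id k H) Q.comul (Q.comul h) * Q.Phi := by
  rw [Q.comul_coassoc, mul_assoc, Q.inv_mul_Phi, mul_one]

end QuasiBialgebra

namespace QuasiHopfAlgebra

variable {k H B : Type*} [Field k] [Ring H] [Algebra k H] [Ring B] [Algebra k B]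
  (Q : QuasiHopfAlgebra k H) (v : H →ₐ[k] B)

/-- The linear map `a ⊗ b ↦ S(a) α b`, through which the left antipode axiom is expressed. -/
noncomputable def alphaContraction : H ⊗[k] H →ₗ[k] H :=
  LinearMap.mul' k H ∘ₗ TensorProduct.map (LinearMap.mulRight k Q.alpha ∘ₗ Q.S) LinearMap.id

@[simp]
theorem alphaContraction_tmul (a b : H) :
    Q.alphaContraction (a ⊗ₜ b) = Q.S a * Q.alpha * b := by
  simp [alphaContraction]

theorem alphaContraction_comul (h : H) :
    Q.alphaContraction (Q.comul h) = Q.counit h • Q.alpha := by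
  obtain ⟨n, x, y, hxy⟩ := exists_fin_sum_tmul (Q.comul h)
  simpa [hxy] using Q.antipode_left h n x y hxy

theorem alphaContraction_mul_tmul (t : H ⊗[k] H) (a b : H) :
    Q.alphaContraction (t * a ⊗ₜ b) = Q.S a * Q.alphaContraction t * b := by
  induction t with
  | zero => simp
  | tmul p q => simp [Q.S_mul, mul_assoc]
  | add s t hs ht => simp only [add_mul, mul_add, map_add, hs, ht]

theorem alphaContraction_comul_mul (h : H) (t : H ⊗[k] H) :
    Q.alphaContraction (Q.comul h * t) = Q.counit h • Q.alphaContraction t := by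
  induction t with
  | zero => simp
  | tmul a b => simp [alphaContraction_mul_tmul, alphaContraction_comul]
  | add s t hs ht => simp only [mul_add, map_add, smul_add, hs, ht]

theorem counit_alphaContraction (t : H ⊗[k] H) :
    Q.counit (Q.alphaContraction t) = Q.counit (Q.S (Q.counitRight H t)) := by
  induction t with
  | zero => simp
  | tmul a b => simp [Q.counit_alpha, mul_comm]
  | add s t hs ht => simp only [map_add, hs, ht]

theorem counit_S (h : H) : Q.counit (Q.S h) = Q.counit h := by
  simpa [alphaContraction_comul, Q.counit_alpha, Q.counitRight_comul] using
    (Q.counit_alphaContraction (Q.comul h)).symm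

/-- The linear map `b ⊗ c ↦ b v(β S(c))` from `B ⊗ H` to `B`. For `v = id` the right antipode axiom
computes its value on `Δ(h)`. -/
noncomputable def betaContraction : B ⊗[k] H →ₗ[k] B :=
  LinearMap.mul' k B ∘ₗ
    TensorProduct.map LinearMap.id (v.toLinearMap ∘ₗ LinearMap.mulLeft k Q.beta ∘ₗ Q.S)

@[simp]
theorem betaContraction_tmul (b : B) (c : H) :
    Q.betaContraction v (b ⊗ₜ c) = b * v (Q.beta * Q.S c) := by
  simp [betaContraction]

theorem betaContraction_map_comul (h : H) :
    Q.betaContraction v (Algebra.TensorProduct.map v (AlgHom.id k H) (Q.comul h)) =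
      Q.counit h • v Q.beta := by
  obtain ⟨n, x, y, hxy⟩ := exists_fin_sum_tmul (Q.comul h)
  simpa [hxy, mul_assoc] using congrArg v (Q.antipode_right h n x y hxy)

theorem betaContraction_tmul_mul (b : B) (c : H) (w : B ⊗[k] H) :
    Q.betaContraction v (b ⊗ₜ c * w) = b * Q.betaContraction v w * v (Q.S c) := by
  induction w with
  | zero => simp
  | tmul b' c' => simp [Q.S_mul, mul_assoc]
  | add w w' hw hw' => simp only [mul_add, add_mul, map_add, hw, hw']

theorem betaContraction_mul_map_comul (w : B ⊗[k] H) (h : H) :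
    Q.betaContraction v (w * Algebra.TensorProduct.map v (AlgHom.id k H) (Q.comul h)) =
      Q.counit h • Q.betaContraction v w := by
  induction w with
  | zero => simp
  | tmul b c => simp [betaContraction_tmul_mul, betaContraction_map_comul, mul_assoc]
  | add w w' hw hw' => simp only [add_mul, map_add, smul_add, hw, hw']

/-- The linear map sending `x ⊗ y ⊗ z` to the endomorphism `b ↦ v(x) b v(S(y) α z)` of `B`. -/
noncomputable def sandwich : H ⊗[k] (H ⊗[k] H) →ₗ[k] Module.End k B :=
  (AlgHom.mulLeftRight k B).toLinearMap ∘ₗ TensorProduct.map v.toLinearMap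
    ((MulOpposite.opLinearEquiv k).toLinearMap ∘ₗ v.toLinearMap ∘ₗ Q.alphaContraction)

@[simp]
theorem sandwich_tmul (x : H) (s : H ⊗[k] H) (b : B) :
    Q.sandwich v (x ⊗ₜ s) b = v x * b * v (Q.alphaContraction s) := by
  simp [sandwich]

theorem sandwich_map_comul_mul (t : H ⊗[k] H) (M : H ⊗[k] (H ⊗[k] H)) (b : B) :
    Q.sandwich v (Algebra.TensorProduct.map (AlgHom.id k H) Q.comul t * M) b =
      v (Q.counitRight H t) * Q.sandwich v M b := by
  induction t with
  | zero => simp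
  | add s t hs ht => simp only [map_add, add_mul, LinearMap.add_apply, hs, ht]
  | tmul x y =>
    induction M with
    | zero => simp
    | tmul x' s => simp [alphaContraction_comul_mul, mul_assoc]
    | add M N hM hN => simp only [mul_add, map_add, LinearMap.add_apply, hM, hN]

theorem sandwich_betaContraction_mul (M : H ⊗[k] (H ⊗[k] H)) (t : H ⊗[k] H) (w : B ⊗[k] H)
    (z : H) :
    Q.sandwich v M (Q.betaContraction v (Algebra.TensorProduct.map v (AlgHom.id k H) t * w)) * v z =
      Q.sandwich v (M * Algebra.TensorProduct.assoc k k k H H H (t ⊗ₜ z))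
        (Q.betaContraction v w) := by
  induction t with
  | zero => simp
  | add s t hs ht =>
    simp only [map_add, add_mul, mul_add, TensorProduct.add_tmul, LinearMap.add_apply, hs, ht]
  | tmul p q =>
    induction M with
    | zero => simp
    | tmul x s => simp [betaContraction_tmul_mul, alphaContraction_mul_tmul, mul_assoc]
    | add M N hM hN => simp only [map_add, add_mul, LinearMap.add_apply, hM, hN]

/-- The canonical projection `E(b) = v(q¹) b₍₀₎ v(β S(q² b₍₁₎))` attached to `ρ` and `v`, with
`S(q²)` expanded to `S(X²) α X³`. -/
noncomputable def canonicalProjection (ρ : B →ₐ[k] B ⊗[k] H) : B →ₗ[k] B :=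
  Q.sandwich v Q.Phi ∘ₗ Q.betaContraction v ∘ₗ ρ.toLinearMap

theorem canonicalProjection_apply (ρ : B →ₐ[k] B ⊗[k] H) (b : B) :
    Q.canonicalProjection v ρ b = Q.sandwich v Q.Phi (Q.betaContraction v (ρ b)) :=
  rfl

section Colinear

variable {v} {ρ : B →ₐ[k] B ⊗[k] H}
  (hv : ∀ h, ρ (v h) = Algebra.TensorProduct.map v (AlgHom.id k H) (Q.comul h))

include hv

theorem canonicalProjection_mul_map (b : B) (h : H) :
    Q.canonicalProjection v ρ (b * v h) = Q.counit h • Q.canonicalProjection v ρ b := by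
  simp only [canonicalProjection_apply, map_mul, hv, betaContraction_mul_map_comul, map_smul]

theorem map_mul_canonicalProjection {ι : Type*} [Fintype ι] {h : H} {x y : ι → H}
    (hxy : Q.comul h = ∑ i, x i ⊗ₜ[k] y i) (b : B) :
    v h * Q.canonicalProjection v ρ b =
      ∑ i, Q.canonicalProjection v ρ (v (x i) * b) * v (y i) := by
  set P := Q.betaContraction v (ρ b) with hP
  calc v h * Q.canonicalProjection v ρ b
    _ = Q.sandwich v (Algebra.TensorProduct.map (AlgHom.id k H) Q.comul (Q.comul h) * Q.Phi) P := by
      rw [sandwich_map_comul_mul, Q.counitRight_comul, canonicalProjection_apply]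
    _ = Q.sandwich v (Q.Phi * Algebra.TensorProduct.assoc k k k H H H
          (Algebra.TensorProduct.map Q.comul (AlgHom.id k H) (Q.comul h))) P := by
      rw [Q.Phi_mul_assoc_map_comul]
    _ = ∑ i, Q.sandwich v (Q.Phi * Algebra.TensorProduct.assoc k k k H H H
          (Q.comul (x i) ⊗ₜ y i)) P := by
      simp [hxy, Finset.mul_sum]
    _ = ∑ i, Q.canonicalProjection v ρ (v (x i) * b) * v (y i) := by
      simp only [hP, ← sandwich_betaContraction_mul, canonicalProjection_apply, map_mul, hv]

theorem canonicalProjection_sandwich (M : H ⊗[k] (H ⊗[k] H)) (b : B) :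
    Q.canonicalProjection v ρ (Q.sandwich v M b) =
      Q.canonicalProjection v ρ
        (v (Q.counitRight H
          (Algebra.TensorProduct.map (AlgHom.id k H) (Q.counitRight H) M)) * b) := by
  induction M with
  | zero => simp
  | tmul x s =>
    simp [Q.canonicalProjection_mul_map hv, counit_alphaContraction, counit_S]
  | add M N hM hN => simp only [map_add, add_mul, LinearMap.add_apply, hM, hN]

theorem canonicalProjection_betaContraction (w : B ⊗[k] H) :
    Q.canonicalProjection v ρ (Q.betaContraction v w) =
      Q.canonicalProjection v ρ (Q.counitRight B w) := by
  induction w with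
  | zero => simp
  | tmul b c =>
    rw [betaContraction_tmul, Q.canonicalProjection_mul_map hv]
    simp [Q.counit_beta, counit_S]
  | add w w' hw hw' => simp only [map_add, hw, hw']

theorem canonicalProjection_canonicalProjection
    (hρ : ∀ b, Algebra.TensorProduct.map (AlgHom.id k B) Q.counit (ρ b) = b ⊗ₜ[k] (1 : k)) (b : B) :
    Q.canonicalProjection v ρ (Q.canonicalProjection v ρ b) = Q.canonicalProjection v ρ b := by
  calc Q.canonicalProjection v ρ (Q.canonicalProjection v ρ b)
    _ = Q.canonicalProjection v ρ (Q.betaContraction v (ρ b)) := by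
      rw [Q.canonicalProjection_apply v ρ b, Q.canonicalProjection_sandwich hv,
        Q.counitRight_map_counitRight_Phi, map_one, one_mul]
    _ = Q.canonicalProjection v ρ b := by
      rw [Q.canonicalProjection_betaContraction hv, Q.counitRight_eq_of_map_counit_eq (hρ b)]

end Colinear

end QuasiHopfAlgebra

theorem IsCanonicalProjection.eq_canonicalProjection {k H B : Type*} [Field k] [Ring H]
    [Algebra k H] [Ring B] [Algebra k B] {Q : QuasiHopfAlgebra k H}
    {R : RightComoduleAlgebra Q.toQuasiBialgebra B} {v : H →ₐ[k] B} {E : B →ₗ[k] B}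
    (hE : IsCanonicalProjection Q R v E) : E = Q.canonicalProjection v R.coact := by
  ext b
  obtain ⟨n, x, y, z, hΦ⟩ := exists_fin_sum_tmul_tmul Q.Phi
  obtain ⟨p, b₀, b₁, hb⟩ := exists_fin_sum_tmul (R.coact b)
  rw [hE b n x y z hΦ p b₀ b₁ hb, Finset.sum_comm, Q.canonicalProjection_apply, hΦ, hb]
  simp [Q.S_mul, Q.S_Sinv, mul_assoc]

theorem statement13_general {k H B : Type*} [Field k] [Ring H] [Algebra k H] [Ring B] [Algebra k B]
    (Q : QuasiHopfAlgebra k H) (ρ : B →ₐ[k] B ⊗[k] H)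
    (hρ : ∀ b, Algebra.TensorProduct.map (AlgHom.id k B) Q.counit (ρ b) = b ⊗ₜ[k] (1 : k))
    (v : H →ₐ[k] B)
    (hv : ∀ h, ρ (v h) = Algebra.TensorProduct.map v (AlgHom.id k H) (Q.comul h))
    {a : B} (ha : a ∈ LinearMap.range (Q.canonicalProjection v ρ))
    {ι : Type*} [Fintype ι] {h : H} {x y : ι → H} (hxy : Q.comul h = ∑ i, x i ⊗ₜ[k] y i) :
    v h * a = ∑ i, Q.canonicalProjection v ρ (v (x i) * a) * v (y i) := by
  obtain ⟨b, rfl⟩ := ha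
  simpa only [Q.canonicalProjection_canonicalProjection hv hρ] using
    Q.map_mul_canonicalProjection hv hxy (Q.canonicalProjection v ρ b)

/-- `v(h) a = (h₁ ▷ a) v(h₂)` for `a` in the coinvariants `A = E(B)`. -/
theorem statement13 {k H B : Type*} [Field k] [Ring H] [Algebra k H]
    [Ring B] [Algebra k B] (Q : QuasiHopfAlgebra k H)
    (R : RightComoduleAlgebra Q.toQuasiBialgebra B)
    (v : H →ₐ[k] B) (hv : IsComodAlgMorphismFromH R v)
    (E : B →ₗ[k] B) (hE : IsCanonicalProjection Q R v E) :
    ∀ a ∈ LinearMap.range E, ∀ (h : H) (m : ℕ) (d1 d2 : Fin m → H),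
      Q.comul h = ∑ j, d1 j ⊗ₜ[k] d2 j →
      v h * a = ∑ j, E (v (d1 j) * a) * v (d2 j) := by
  obtain rfl := hE.eq_canonicalProjection
  exact fun a ha h m d1 d2 hd ↦ statement13_general Q R.coact R.counit_coact v hv.1 ha hd
end

section
/- Let H be a quasi-Hopf algebra, B a right H-comodule algebra, and v : H → B a morphism of right H-comodule algebras. Define E : B → B by E(b) = v(q¹)b₍₀₎v(βS(q²b₍₁₎)) and h▷b = E(v(h)b). Then for b ∈ B: E(b) = b if and only if ρ(b) = (x¹▷b)v(x²) ⊗ x³, where Φ⁻¹ = x¹⊗x²⊗x³. -/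
open TensorProduct BigOperators

/-!
For linear `D, F : B → A` and an algebra map `δ : H → A`, consider convolution
`D ↦ (b ↦ D(b₍₀₎) δ(b₍₁₎))` and projection `F ↦ (b ↦ F(X¹b₍₀₎) δ(β S(X²b₍₁₎) α X³))` with
`Φ_ρ = X¹ ⊗ X² ⊗ X³`. They are mutually inverse bijections between the maps `D` with
`D(b v(h)) = ε(h) D(b)` and the maps `F` with `F(b v(h)) = F(b) δ(h)`, and `E` is the projection
of the identity with `δ = v`.

Take `A = B ⊗ H` and `δ = ρ ∘ v`. As `ρ` is an algebra map, `ρ ∘ E` is the projection of `ρ`. The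
map `T(b) = (x¹ ▷ b)v(x²) ⊗ x³` satisfies `T(b v(h)) = ε(h) T(b)`, and coassociativity of `ρ`
shows that its convolution is `ρ`. Hence `ρ(E(b)) = T(b)` for every `b`, and since `ρ` is
injective, `ρ(b) = T(b)` holds exactly when `E(b) = b`.
-/

section TensorMul

variable {k M N A : Type*} [CommSemiring k] [AddCommMonoid M] [Module k M] [AddCommMonoid N]
  [Module k N] [Semiring A] [Algebra k A]

/-- The linear map `m ⊗ n ↦ f m * g n`. -/
noncomputable def tensorMul (f : M →ₗ[k] A) (g : N →ₗ[k] A) : M ⊗[k] N →ₗ[k] A :=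
  LinearMap.mul' k A ∘ₗ TensorProduct.map f g

@[simp]
lemma tensorMul_tmul (f : M →ₗ[k] A) (g : N →ₗ[k] A) (m : M) (n : N) :
    tensorMul f g (m ⊗ₜ n) = f m * g n := by
  simp [tensorMul]

lemma map_tensorMul {A' : Type*} [Semiring A'] [Algebra k A'] (φ : A →ₐ[k] A')
    (f : M →ₗ[k] A) (g : N →ₗ[k] A) (t : M ⊗[k] N) :
    φ (tensorMul f g t) = tensorMul (φ.toLinearMap ∘ₗ f) (φ.toLinearMap ∘ₗ g) t := by
  induction t using TensorProduct.induction_on with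
  | zero => simp
  | tmul m n => simp
  | add s t hs ht => simp only [map_add, hs, ht]

variable {B C X Y : Type*} [Semiring B] [Algebra k B] [Semiring C] [Algebra k C]
  [Semiring X] [Algebra k X] [Semiring Y] [Algebra k Y]
  {f : B →ₗ[k] A} {g : C →ₗ[k] A} {κ κ' : X →ₐ[k] B} {γ γ' : Y →ₐ[k] C}

lemma tensorMul_mul_map_congr (hf : ∀ b x, f (b * κ x) = f (b * κ' x))
    (hg : ∀ c y, g (c * γ y) = g (c * γ' y)) (t : B ⊗[k] C) (u : X ⊗[k] Y) :
    tensorMul f g (t * Algebra.TensorProduct.map κ γ u) =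
      tensorMul f g (t * Algebra.TensorProduct.map κ' γ' u) := by
  induction u using TensorProduct.induction_on with
  | zero => simp
  | add u w hu hw => simp only [map_add, mul_add, hu, hw]
  | tmul x y =>
    induction t using TensorProduct.induction_on with
    | zero => simp
    | add s t hs ht => simp only [map_add, add_mul, hs, ht]
    | tmul b c => simp [hf, hg]

lemma tensorMul_map_mul_congr (hf : ∀ b x, f (κ x * b) = f (κ' x * b))
    (hg : ∀ c y, g (γ y * c) = g (γ' y * c)) (t : B ⊗[k] C) (u : X ⊗[k] Y) :
    tensorMul f g (Algebra.TensorProduct.map κ γ u * t) =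
      tensorMul f g (Algebra.TensorProduct.map κ' γ' u * t) := by
  induction u using TensorProduct.induction_on with
  | zero => simp
  | add u w hu hw => simp only [map_add, add_mul, hu, hw]
  | tmul x y =>
    induction t using TensorProduct.induction_on with
    | zero => simp
    | add s t hs ht => simp only [map_add, mul_add, hs, ht]
    | tmul b c => simp [hf, hg]

lemma tensorMul_mul_tmul_one (t : B ⊗[k] C) (b : B) :
    tensorMul f g (t * (b ⊗ₜ 1)) = tensorMul (f ∘ₗ LinearMap.mulRight k b) g t := by
  induction t using TensorProduct.induction_on with
  | zero => simp
  | tmul b c => simp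
  | add s t hs ht => simp only [map_add, add_mul, hs, ht]

lemma tensorMul_mul_one_tmul (γ : C →ₐ[k] A) (t : B ⊗[k] C) (c : C) :
    tensorMul f γ.toLinearMap (t * (1 ⊗ₜ c)) = tensorMul f γ.toLinearMap t * γ c := by
  induction t using TensorProduct.induction_on with
  | zero => simp
  | tmul b c => simp [mul_assoc]
  | add s t hs ht => simp only [map_add, add_mul, hs, ht]

end TensorMul

section AppendOne

variable (k A B C : Type*) [CommSemiring k] [Semiring A] [Algebra k A]
  [Semiring B] [Algebra k B] [Semiring C] [Algebra k C]

/-- The algebra map `a ⊗ b ↦ a ⊗ b ⊗ 1`. -/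
noncomputable def appendOne : A ⊗[k] B →ₐ[k] A ⊗[k] (B ⊗[k] C) :=
  Algebra.TensorProduct.map (AlgHom.id k A) Algebra.TensorProduct.includeLeft

variable {k A B C}

@[simp]
lemma appendOne_tmul (a : A) (b : B) : appendOne k A B C (a ⊗ₜ b) = a ⊗ₜ (b ⊗ₜ 1) := rfl

lemma assoc_tmul_eq_appendOne_mul (t : A ⊗[k] B) (c : C) :
    Algebra.TensorProduct.assoc k k k A B C (t ⊗ₜ c) =
      appendOne k A B C t * (1 ⊗ₜ (1 ⊗ₜ c)) := by
  induction t using TensorProduct.induction_on with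
  | zero => simp
  | tmul a b => simp
  | add s t hs ht => simp only [TensorProduct.add_tmul, map_add, add_mul, hs, ht]

end AppendOne

lemma exists_sum_tmul_tmul_eq {k M N P : Type*} [CommSemiring k] [AddCommMonoid M] [Module k M]
    [AddCommMonoid N] [Module k N] [AddCommMonoid P] [Module k P] (t : M ⊗[k] (N ⊗[k] P)) :
    ∃ (n : ℕ) (a : Fin n → M) (b : Fin n → N) (c : Fin n → P),
      t = ∑ i, a i ⊗ₜ[k] (b i ⊗ₜ[k] c i) := by
  obtain ⟨m, a, u, rfl⟩ := TensorProduct.exists_sum_tmul_eq t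
  choose n b c hu using fun i => TensorProduct.exists_sum_tmul_eq (u i)
  let e := (finSigmaFinEquiv (n := n)).symm
  refine ⟨∑ i, n i, fun j => a (e j).1, fun j => b (e j).1 (e j).2,
    fun j => c (e j).1 (e j).2, ?_⟩
  rw [e.sum_comp fun s => a s.1 ⊗ₜ[k] (b s.1 s.2 ⊗ₜ[k] c s.1 s.2), Fintype.sum_sigma]
  simp only [← TensorProduct.tmul_sum, ← hu]

namespace QuasiBialgebra

variable {k H : Type*} [Field k] [Ring H] [Algebra k H] (Q : QuasiBialgebra k H)

/-- The algebra map `h ⊗ a ↦ ε(h) a`. -/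
noncomputable def counitLeft (A : Type*) [Ring A] [Algebra k A] : H ⊗[k] A →ₐ[k] A :=
  (Algebra.TensorProduct.lid k A).toAlgHom.comp
    (Algebra.TensorProduct.map Q.counit (AlgHom.id k A))

/-- The algebra map `h ↦ ε(h) 1`, what `Δ` collapses to under contraction with the antipode. -/
noncomputable def counitOne (A : Type*) [Ring A] [Algebra k A] : H →ₐ[k] A :=
  (Algebra.ofId k A).comp Q.counit

section

variable {A C : Type*} [Ring A] [Algebra k A] [Ring C] [Algebra k C]

@[simp]
lemma counitLeft_tmul (h : H) (a : A) : Q.counitLeft A (h ⊗ₜ a) = Q.counit h • a := by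
  simp [counitLeft]

lemma counitOne_apply (h : H) : Q.counitOne A h = Q.counit h • 1 := by
  simp [counitOne, Algebra.ofId_apply, Algebra.algebraMap_eq_smul_one]

lemma counitLeft_map (f : A →ₐ[k] C) (t : H ⊗[k] A) :
    Q.counitLeft C (Algebra.TensorProduct.map (AlgHom.id k H) f t) = f (Q.counitLeft A t) := by
  induction t using TensorProduct.induction_on with
  | zero => simp
  | tmul h a => simp
  | add s t hs ht => simp only [map_add, hs, ht]

lemma counitLeft_comul (h : H) : Q.counitLeft H (Q.comul h) = h := by
  simp [counitLeft, Q.counit_comul_left]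

lemma counitLeft_assoc (t : H ⊗[k] H) (a : A) :
    Q.counitLeft (H ⊗[k] A) (Algebra.TensorProduct.assoc k k k H H A (t ⊗ₜ a)) =
      Q.counitLeft H t ⊗ₜ a := by
  induction t using TensorProduct.induction_on with
  | zero => simp
  | tmul g h => simp [TensorProduct.smul_tmul']
  | add s t hs ht => simp only [TensorProduct.add_tmul, map_add, hs, ht]

lemma counitLeft_comul_map (t : H ⊗[k] A) :
    Q.counitLeft (H ⊗[k] A) (Algebra.TensorProduct.assoc k k k H H A
      (Algebra.TensorProduct.map Q.comul (AlgHom.id k A) t)) = t := by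
  induction t using TensorProduct.induction_on with
  | zero => simp
  | tmul h a =>
    rw [Algebra.TensorProduct.map_tmul, counitLeft_assoc, counitLeft_comul, AlgHom.id_apply]
  | add s t hs ht => simp only [map_add, hs, ht]

lemma map_counitOne (κ : A →ₐ[k] C) (t : H ⊗[k] A) (B : Type*) [Ring B] [Algebra k B] :
    Algebra.TensorProduct.map (Q.counitOne B) κ t = 1 ⊗ₜ κ (Q.counitLeft A t) := by
  induction t using TensorProduct.induction_on with
  | zero => simp
  | tmul h a => simp [counitOne_apply, TensorProduct.smul_tmul]
  | add s t hs ht => simp only [map_add, TensorProduct.tmul_add, hs, ht]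

end

lemma counitLeft_counitLeft_Phi : Q.counitLeft H (Q.counitLeft (H ⊗[k] H) Q.Phi) = 1 := by
  have middle : Algebra.TensorProduct.map (AlgHom.id k H) (Q.counitLeft H) Q.Phi = 1 := by
    rw [counitLeft, Algebra.TensorProduct.map_id_comp, AlgHom.comp_apply, Q.counit_Phi, map_one]
  rw [← counitLeft_map, middle, map_one]

-- Apply `ε ⊗ ε ⊗ id ⊗ id` to the pentagon: two of the five factors become `1`, the other three
-- become `(ε ⊗ id ⊗ id) Φ`, which is therefore idempotent and invertible.
lemma counitLeft_Phi : Q.counitLeft (H ⊗[k] H) Q.Phi = 1 := by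
  have idempotent := congrArg (fun t => Q.counitLeft _ (Q.counitLeft _ t)) Q.pentagon
  simp only [map_mul, counitLeft_map, counitLeft_tmul, map_one, one_smul, AlgHom.comp_apply,
    AlgEquiv.toAlgHom_apply, counitLeft_comul_map, counitLeft_counitLeft_Phi, mul_one,
    one_mul] at idempotent
  have inverse : Q.counitLeft (H ⊗[k] H) Q.PhiInv * Q.counitLeft _ Q.Phi = 1 := by
    rw [← map_mul, Q.inv_mul_Phi, map_one]
  calc Q.counitLeft _ Q.Phi
      = Q.counitLeft _ Q.PhiInv * (Q.counitLeft _ Q.Phi * Q.counitLeft _ Q.Phi) := by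
        rw [← mul_assoc, inverse, one_mul]
    _ = 1 := by rw [idempotent, inverse]

lemma map_counitOne_Phi {B C : Type*} [Ring B] [Algebra k B] [Ring C] [Algebra k C]
    (κ : H ⊗[k] H →ₐ[k] C) : Algebra.TensorProduct.map (Q.counitOne B) κ Q.Phi = 1 := by
  rw [map_counitOne, counitLeft_Phi, map_one, ← Algebra.TensorProduct.one_def]

lemma map_PhiInv_eq_one {C : Type*} [Ring C] [Algebra k C] {φ : H ⊗[k] (H ⊗[k] H) →ₐ[k] C}
    (hφ : φ Q.Phi = 1) : φ Q.PhiInv = 1 := by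
  rw [← mul_one (φ Q.PhiInv), ← hφ, ← map_mul, Q.inv_mul_Phi, map_one, hφ]

lemma tensorMul_mul_map_eq {A B C X : Type*} [Ring A] [Algebra k A] [Ring B] [Algebra k B]
    [Ring C] [Algebra k C] [Ring X] [Algebra k X] {v : H →ₐ[k] B} {f : B →ₗ[k] A}
    (hf : ∀ b h, f (b * v h) = Q.counit h • f b) (g : C →ₗ[k] A) {κ : X →ₐ[k] C} {y : H ⊗[k] X}
    (hy : Algebra.TensorProduct.map (Q.counitOne B) κ y = 1) (t : B ⊗[k] C) :
    tensorMul f g (t * Algebra.TensorProduct.map v κ y) = tensorMul f g t := by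
  rw [tensorMul_mul_map_congr (κ' := Q.counitOne B) (γ' := κ)
    (fun b h => by simp [hf, counitOne_apply]) (fun _ _ => rfl), hy, mul_one]

end QuasiBialgebra

namespace QuasiHopfAlgebra

variable {k H : Type*} [Field k] [Ring H] [Algebra k H] (Q : QuasiHopfAlgebra k H)

/-- The linear map `a ⊗ b ↦ S(a) α b`. -/
noncomputable def alphaPairing : H ⊗[k] H →ₗ[k] H :=
  tensorMul (LinearMap.mulRight k Q.alpha ∘ₗ Q.S) LinearMap.id

/-- The linear map `a ⊗ b ↦ a β S(b)`. -/
noncomputable def betaPairing : H ⊗[k] H →ₗ[k] H :=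
  tensorMul (LinearMap.mulRight k Q.beta) Q.S

/-- The linear map `a ⊗ b ⊗ c ↦ a β S(b) α c`. -/
noncomputable def antipodeTriple : H ⊗[k] (H ⊗[k] H) →ₗ[k] H :=
  tensorMul (LinearMap.mulRight k Q.beta) Q.alphaPairing

@[simp]
lemma alphaPairing_tmul (a b : H) : Q.alphaPairing (a ⊗ₜ b) = Q.S a * Q.alpha * b := by
  simp [alphaPairing]

@[simp]
lemma betaPairing_tmul (a b : H) : Q.betaPairing (a ⊗ₜ b) = a * Q.beta * Q.S b := by
  simp [betaPairing]

@[simp]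
lemma antipodeTriple_tmul (a : H) (u : H ⊗[k] H) :
    Q.antipodeTriple (a ⊗ₜ u) = a * Q.beta * Q.alphaPairing u := by
  simp [antipodeTriple]

lemma alphaPairing_comul (h : H) : Q.alphaPairing (Q.comul h) = Q.counit h • Q.alpha := by
  obtain ⟨n, a, b, hab⟩ := TensorProduct.exists_sum_tmul_eq (Q.comul h)
  rw [← Q.antipode_left h n a b hab, hab]
  simp

lemma betaPairing_comul (h : H) : Q.betaPairing (Q.comul h) = Q.counit h • Q.beta := by
  obtain ⟨n, a, b, hab⟩ := TensorProduct.exists_sum_tmul_eq (Q.comul h)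
  rw [← Q.antipode_right h n a b hab, hab]
  simp

lemma antipodeTriple_Phi : Q.antipodeTriple Q.Phi = 1 := by
  obtain ⟨n, a, b, c, habc⟩ := exists_sum_tmul_tmul_eq Q.Phi
  rw [← Q.antipode_Phi n a b c habc, habc]
  simp [mul_assoc]

lemma alphaPairing_mul_tmul (u : H ⊗[k] H) (a b : H) :
    Q.alphaPairing (u * (a ⊗ₜ b)) = Q.S a * Q.alphaPairing u * b := by
  induction u using TensorProduct.induction_on with
  | zero => simp
  | tmul c d => simp [Q.S_mul, mul_assoc]
  | add u w hu hw => simp only [add_mul, mul_add, map_add, hu, hw]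

lemma alphaPairing_comul_mul (h : H) (u : H ⊗[k] H) :
    Q.alphaPairing (Q.comul h * u) = Q.counit h • Q.alphaPairing u := by
  induction u using TensorProduct.induction_on with
  | zero => simp
  | tmul a b => simp [alphaPairing_mul_tmul, alphaPairing_comul]
  | add u w hu hw => simp only [mul_add, map_add, smul_add, hu, hw]

lemma antipodeTriple_tmul_mul_appendOne (a : H) (u w : H ⊗[k] H) :
    Q.antipodeTriple (a ⊗ₜ u * appendOne k H H H w) =
      a * Q.betaPairing w * Q.alphaPairing u := by
  induction w using TensorProduct.induction_on with
  | zero => simp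
  | tmul b c => simp [alphaPairing_mul_tmul, mul_assoc]
  | add w z hw hz => simp only [mul_add, add_mul, map_add, hw, hz]

lemma antipodeTriple_mul_appendOne_comul (t : H ⊗[k] (H ⊗[k] H)) (h : H) :
    Q.antipodeTriple (t * appendOne k H H H (Q.comul h)) =
      Q.counit h • Q.antipodeTriple t := by
  induction t using TensorProduct.induction_on with
  | zero => simp
  | tmul a u => simp [antipodeTriple_tmul_mul_appendOne, betaPairing_comul]
  | add s t hs ht => simp only [add_mul, map_add, smul_add, hs, ht]

lemma antipodeTriple_mul_one_tmul (t : H ⊗[k] (H ⊗[k] H)) (h : H) :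
    Q.antipodeTriple (t * (1 ⊗ₜ (1 ⊗ₜ h))) = Q.antipodeTriple t * h := by
  induction t using TensorProduct.induction_on with
  | zero => simp
  | tmul a u => simp [alphaPairing_mul_tmul, Q.S_one, mul_assoc]
  | add s t hs ht => simp only [add_mul, map_add, hs, ht]

lemma antipodeTriple_mul_comul_map (t : H ⊗[k] (H ⊗[k] H)) (u : H ⊗[k] H) :
    Q.antipodeTriple (t * Algebra.TensorProduct.assoc k k k H H H
        (Algebra.TensorProduct.map Q.comul (AlgHom.id k H) u)) =
      Q.antipodeTriple (t * Algebra.TensorProduct.assoc k k k H H H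
        (Algebra.TensorProduct.map (Q.counitOne (H ⊗[k] H)) (AlgHom.id k H) u)) := by
  induction u using TensorProduct.induction_on with
  | zero => simp
  | tmul a b =>
    simp only [Algebra.TensorProduct.map_tmul, assoc_tmul_eq_appendOne_mul, ← mul_assoc,
      antipodeTriple_mul_one_tmul, antipodeTriple_mul_appendOne_comul,
      QuasiBialgebra.counitOne_apply, map_smul, map_one, mul_smul_comm, mul_one]
  | add u w hu hw => simp only [map_add, mul_add, hu, hw]

lemma antipodeTriple_map_comul_mul (t : H ⊗[k] (H ⊗[k] H)) (u : H ⊗[k] H) :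
    Q.antipodeTriple (Algebra.TensorProduct.map (AlgHom.id k H) Q.comul u * t) =
      Q.antipodeTriple
        (Algebra.TensorProduct.map (AlgHom.id k H) (Q.counitOne (H ⊗[k] H)) u * t) :=
  tensorMul_map_mul_congr (fun _ _ => rfl)
    (fun w h => by simp [alphaPairing_comul_mul, QuasiBialgebra.counitOne_apply]) t u

section Contraction

variable {A B : Type*} [Ring A] [Algebra k A] [Ring B] [Algebra k B]

/-- The linear map `b ⊗ h ⊗ g ↦ F(b) δ(β S(h) α g)`, which evaluates the formula of the canonical
projection. -/
noncomputable def contractPair (F : B →ₗ[k] A) (δ : H →ₐ[k] A) : B ⊗[k] (H ⊗[k] H) →ₗ[k] A :=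
  tensorMul F (δ.toLinearMap ∘ₗ LinearMap.mulLeft k Q.beta ∘ₗ Q.alphaPairing)

/-- The linear map `b ⊗ h ⊗ g ⊗ l ↦ D(b) δ(h β S(g) α l)`. -/
noncomputable def contractTriple (D : B →ₗ[k] A) (δ : H →ₐ[k] A) :
    B ⊗[k] (H ⊗[k] (H ⊗[k] H)) →ₗ[k] A :=
  tensorMul D (δ.toLinearMap ∘ₗ Q.antipodeTriple)

@[simp]
lemma contractPair_tmul (F : B →ₗ[k] A) (δ : H →ₐ[k] A) (b : B) (u : H ⊗[k] H) :
    Q.contractPair F δ (b ⊗ₜ u) = F b * δ (Q.beta * Q.alphaPairing u) := by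
  simp [contractPair]

@[simp]
lemma contractTriple_tmul (D : B →ₗ[k] A) (δ : H →ₐ[k] A) (b : B) (t : H ⊗[k] (H ⊗[k] H)) :
    Q.contractTriple D δ (b ⊗ₜ t) = D b * δ (Q.antipodeTriple t) := by
  simp [contractTriple]

lemma map_contractPair {A' : Type*} [Ring A'] [Algebra k A'] (φ : A →ₐ[k] A') (F : B →ₗ[k] A)
    (δ : H →ₐ[k] A) (t : B ⊗[k] (H ⊗[k] H)) :
    φ (Q.contractPair F δ t) = Q.contractPair (φ.toLinearMap ∘ₗ F) (φ.comp δ) t :=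
  map_tensorMul φ F _ t

lemma contractPair_mul_one_tmul (F : B →ₗ[k] A) (δ : H →ₐ[k] A) (t : B ⊗[k] (H ⊗[k] H)) (h : H) :
    Q.contractPair F δ (t * (1 ⊗ₜ (1 ⊗ₜ h))) = Q.contractPair F δ t * δ h := by
  induction t using TensorProduct.induction_on with
  | zero => simp
  | tmul b u => simp [alphaPairing_mul_tmul, Q.S_one, mul_assoc]
  | add s t hs ht => simp only [add_mul, map_add, hs, ht]

variable {v : H →ₐ[k] B} {F : B →ₗ[k] A} {δ : H →ₐ[k] A} (hF : ∀ b h, F (b * v h) = F b * δ h)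
include hF

lemma contractPair_tmul_mul_appendOne_map (b : B) (u w : H ⊗[k] H) :
    Q.contractPair F δ (b ⊗ₜ u *
        appendOne k B H H (Algebra.TensorProduct.map v (AlgHom.id k H) w)) =
      F b * δ (Q.betaPairing w * Q.alphaPairing u) := by
  induction w using TensorProduct.induction_on with
  | zero => simp
  | tmul g h => simp [hF, alphaPairing_mul_tmul, mul_assoc]
  | add w z hw hz => simp only [map_add, mul_add, add_mul, hw, hz]

lemma contractPair_mul_appendOne_map_comul (t : B ⊗[k] (H ⊗[k] H)) (h : H) :
    Q.contractPair F δ (t *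
        appendOne k B H H (Algebra.TensorProduct.map v (AlgHom.id k H) (Q.comul h))) =
      Q.counit h • Q.contractPair F δ t := by
  induction t using TensorProduct.induction_on with
  | zero => simp
  | tmul b u => simp [Q.contractPair_tmul_mul_appendOne_map hF, betaPairing_comul]
  | add s t hs ht => simp only [add_mul, map_add, smul_add, hs, ht]

lemma contractPair_tmul_one_mul_map (b : B) (t : H ⊗[k] (H ⊗[k] H)) :
    Q.contractPair F δ (b ⊗ₜ 1 * Algebra.TensorProduct.map v (AlgHom.id k (H ⊗[k] H)) t) =
      F b * δ (Q.antipodeTriple t) := by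
  induction t using TensorProduct.induction_on with
  | zero => simp
  | tmul h u => simp [hF, mul_assoc]
  | add s t hs ht => simp only [map_add, mul_add, hs, ht]

end Contraction

end QuasiHopfAlgebra

namespace RightComoduleAlgebra

section Coaction

variable {k H B : Type*} [Field k] [Ring H] [Algebra k H] [Ring B] [Algebra k B]
  {Q : QuasiBialgebra k H} (R : RightComoduleAlgebra Q B)

/-- The algebra map `ρ ⊗ id : B ⊗ X → B ⊗ (H ⊗ X)`. -/
noncomputable def coactTensor (X : Type*) [Ring X] [Algebra k X] :
    B ⊗[k] X →ₐ[k] B ⊗[k] (H ⊗[k] X) :=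
  (Algebra.TensorProduct.assoc k k k B H X).toAlgHom.comp
    (Algebra.TensorProduct.map R.coact (AlgHom.id k X))

section

variable {X Y : Type*} [Ring X] [Algebra k X] [Ring Y] [Algebra k Y]

lemma coactTensor_tmul (b : B) (x : X) :
    R.coactTensor X (b ⊗ₜ x) = Algebra.TensorProduct.assoc k k k B H X (R.coact b ⊗ₜ x) :=
  rfl

lemma coactTensor_map (f : X →ₐ[k] Y) (t : B ⊗[k] X) :
    R.coactTensor Y (Algebra.TensorProduct.map (AlgHom.id k B) f t) =
      Algebra.TensorProduct.map (AlgHom.id k B) (Algebra.TensorProduct.map (AlgHom.id k H) f)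
        (R.coactTensor X t) := by
  induction t using TensorProduct.induction_on with
  | zero => simp
  | add s t hs ht => simp only [map_add, hs, ht]
  | tmul b x =>
    simp only [Algebra.TensorProduct.map_tmul, coactTensor_tmul, AlgHom.id_apply]
    induction R.coact b using TensorProduct.induction_on with
    | zero => simp
    | tmul c h => simp
    | add s t hs ht => simp only [TensorProduct.add_tmul, map_add, hs, ht]

end

lemma map_PhiRhoInv_eq_one {C : Type*} [Ring C] [Algebra k C]
    {φ : B ⊗[k] (H ⊗[k] H) →ₐ[k] C} (hφ : φ R.PhiRho = 1) : φ R.PhiRhoInv = 1 := by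
  rw [← mul_one (φ R.PhiRhoInv), ← hφ, ← map_mul, R.inv_mul_PhiRho, map_one, hφ]

lemma PhiRho_mul_coactTensor_coact (b : B) :
    R.PhiRho * R.coactTensor H (R.coact b) =
      Algebra.TensorProduct.map (AlgHom.id k B) Q.comul (R.coact b) * R.PhiRho :=
  R.coact_coassoc b

lemma PhiRhoInv_mul_map_comul_coact (b : B) :
    R.PhiRhoInv * Algebra.TensorProduct.map (AlgHom.id k B) Q.comul (R.coact b) =
      R.coactTensor H (R.coact b) * R.PhiRhoInv := by
  calc _ = R.PhiRhoInv * (Algebra.TensorProduct.map (AlgHom.id k B) Q.comul (R.coact b) *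
          R.PhiRho) * R.PhiRhoInv := by
        rw [mul_assoc, mul_assoc, R.PhiRho_mul_inv, mul_one]
    _ = _ := by
        rw [← PhiRho_mul_coactTensor_coact, ← mul_assoc, R.inv_mul_PhiRho, one_mul]

lemma map_counitOne_coact {C : Type*} [Ring C] [Algebra k C] (b : B) :
    Algebra.TensorProduct.map (AlgHom.id k B) (Q.counitOne C) (R.coact b) = b ⊗ₜ 1 := by
  rw [QuasiBialgebra.counitOne, Algebra.TensorProduct.map_id_comp, AlgHom.comp_apply,
    R.counit_coact, Algebra.TensorProduct.map_tmul, map_one, AlgHom.id_apply]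

/-- The map `b ↦ D(b₍₀₎) δ(b₍₁₎)`. -/
noncomputable def convolve {A : Type*} [Ring A] [Algebra k A] (D : B →ₗ[k] A) (δ : H →ₐ[k] A) :
    B →ₗ[k] A :=
  tensorMul D δ.toLinearMap ∘ₗ R.coact.toLinearMap

lemma convolve_apply {A : Type*} [Ring A] [Algebra k A] (D : B →ₗ[k] A) (δ : H →ₐ[k] A) (b : B) :
    R.convolve D δ b = tensorMul D δ.toLinearMap (R.coact b) := rfl

lemma coact_injective : Function.Injective R.coact := by
  intro b c hbc
  have : b ⊗ₜ[k] (1 : k) = c ⊗ₜ[k] 1 := by rw [← R.counit_coact, hbc, R.counit_coact]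
  simpa using congrArg (Algebra.TensorProduct.rid k k B) this

end Coaction

section Projection

variable {k H A B : Type*} [Field k] [Ring H] [Algebra k H] [Ring A] [Algebra k A] [Ring B]
  [Algebra k B] {Q : QuasiHopfAlgebra k H} (R : RightComoduleAlgebra Q.toQuasiBialgebra B)

/-- The map `b ↦ F(X¹b₍₀₎) δ(β S(X²b₍₁₎) α X³)`, where `Φ_ρ = X¹ ⊗ X² ⊗ X³`; the canonical
projection is the case `F = id`, `δ = v`. -/
noncomputable def project (F : B →ₗ[k] A) (δ : H →ₐ[k] A) : B →ₗ[k] A :=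
  Q.contractPair F δ ∘ₗ LinearMap.mulLeft k R.PhiRho ∘ₗ
    ((appendOne k B H H).comp R.coact).toLinearMap

lemma project_apply (F : B →ₗ[k] A) (δ : H →ₐ[k] A) (b : B) :
    R.project F δ b = Q.contractPair F δ (R.PhiRho * appendOne k B H H (R.coact b)) := rfl

lemma map_project {A' : Type*} [Ring A'] [Algebra k A'] (φ : A →ₐ[k] A') (F : B →ₗ[k] A)
    (δ : H →ₐ[k] A) (b : B) :
    φ (R.project F δ b) = R.project (φ.toLinearMap ∘ₗ F) (φ.comp δ) b :=
  Q.map_contractPair φ F δ _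

lemma tensorMul_project (F : B →ₗ[k] A) (δ : H →ₐ[k] A) (t : B ⊗[k] H) :
    tensorMul (R.project F δ) δ.toLinearMap t =
      Q.contractPair F δ (R.PhiRho * R.coactTensor H t) := by
  induction t using TensorProduct.induction_on with
  | zero => simp
  | tmul b h =>
    rw [tensorMul_tmul, coactTensor_tmul, assoc_tmul_eq_appendOne_mul, ← mul_assoc,
      Q.contractPair_mul_one_tmul, project_apply, AlgHom.toLinearMap_apply]
  | add s t hs ht => simp only [map_add, mul_add, hs, ht]

lemma contractPair_map_comul_coact_mul (F : B →ₗ[k] A) (δ : H →ₐ[k] A) (b : B)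
    (t : B ⊗[k] (H ⊗[k] H)) :
    Q.contractPair F δ (Algebra.TensorProduct.map (AlgHom.id k B) Q.comul (R.coact b) * t) =
      Q.contractPair F δ (b ⊗ₜ 1 * t) := by
  rw [← R.map_counitOne_coact]
  exact tensorMul_map_mul_congr (fun _ _ => rfl)
    (fun u h => by simp [Q.alphaPairing_comul_mul, QuasiBialgebra.counitOne_apply]) t _

variable {R} {v : H →ₐ[k] B}

lemma project_mul {F : B →ₗ[k] A} {δ : H →ₐ[k] A} (hv : IsComodAlgMorphismFromH R v)
    (hF : ∀ b h, F (b * v h) = F b * δ h) (b : B) (h : H) :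
    R.project F δ (b * v h) = Q.counit h • R.project F δ b := by
  rw [project_apply, map_mul R.coact, map_mul (appendOne k B H H), hv.1, ← mul_assoc,
    Q.contractPair_mul_appendOne_map_comul hF, ← project_apply]

theorem convolve_project {F : B →ₗ[k] A} {δ : H →ₐ[k] A} (hv : IsComodAlgMorphismFromH R v)
    (hF : ∀ b h, F (b * v h) = F b * δ h) : R.convolve (R.project F δ) δ = F := by
  ext b
  rw [convolve_apply, tensorMul_project, PhiRho_mul_coactTensor_coact,
    contractPair_map_comul_coact_mul, hv.2, Q.contractPair_tmul_one_mul_map hF,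
    Q.antipodeTriple_Phi, map_one, mul_one]

end Projection

section Reconstruction

variable {k H A B : Type*} [Field k] [Ring H] [Algebra k H] [Ring A] [Algebra k A] [Ring B]
  [Algebra k B] {Q : QuasiHopfAlgebra k H} (R : RightComoduleAlgebra Q.toQuasiBialgebra B)

lemma contractPair_convolve (D : B →ₗ[k] A) (δ : H →ₐ[k] A) (t : B ⊗[k] (H ⊗[k] H)) :
    Q.contractPair (R.convolve D δ) δ t =
      Q.contractTriple D δ (R.coactTensor (H ⊗[k] H) t) := by
  induction t using TensorProduct.induction_on with
  | zero => simp
  | add s t hs ht => simp only [map_add, hs, ht]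
  | tmul b u =>
    rw [Q.contractPair_tmul, convolve_apply, coactTensor_tmul]
    induction R.coact b using TensorProduct.induction_on with
    | zero => simp
    | tmul c h =>
      induction u using TensorProduct.induction_on with
      | zero => simp
      | tmul g l => simp [mul_assoc]
      | add u w hu hw => simp only [TensorProduct.tmul_add, map_add, mul_add, hu, hw]
    | add s t hs ht => simp only [TensorProduct.add_tmul, map_add, add_mul, hs, ht]

lemma coactTensor_PhiRho_mul_map_appendOne_PhiRhoInv :
    R.coactTensor (H ⊗[k] H) R.PhiRho *
        Algebra.TensorProduct.map (AlgHom.id k B) (appendOne k H H H) R.PhiRhoInv =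
      Algebra.TensorProduct.map (AlgHom.id k B)
          (Algebra.TensorProduct.map (AlgHom.id k H) Q.comul) R.PhiRhoInv *
        (1 ⊗ₜ Q.Phi * Algebra.TensorProduct.map (AlgHom.id k B)
          ((Algebra.TensorProduct.assoc k k k H H H).toAlgHom.comp
            (Algebra.TensorProduct.map Q.comul (AlgHom.id k H))) R.PhiRho) := by
  set l := Algebra.TensorProduct.map (AlgHom.id k B)
    (Algebra.TensorProduct.map (AlgHom.id k H) Q.comul)
  set j := Algebra.TensorProduct.map (AlgHom.id k B) (appendOne k H H H)
  have pentagon : _ * j R.PhiRho = l R.PhiRho * R.coactTensor (H ⊗[k] H) R.PhiRho := R.pentagon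
  have left : l R.PhiRhoInv * l R.PhiRho = 1 := by rw [← map_mul, R.inv_mul_PhiRho, map_one]
  have right : j R.PhiRho * j R.PhiRhoInv = 1 := by rw [← map_mul, R.PhiRho_mul_inv, map_one]
  calc _ = l R.PhiRhoInv * (l R.PhiRho * R.coactTensor _ R.PhiRho) * j R.PhiRhoInv := by
        rw [← mul_assoc, left, one_mul]
    _ = _ := by
        rw [← pentagon, ← mul_assoc, mul_assoc, right, mul_one]

lemma contractTriple_mul_map_appendOne_comul_coact (D : B →ₗ[k] A) (δ : H →ₐ[k] A) (b : B)
    (t : B ⊗[k] (H ⊗[k] (H ⊗[k] H))) :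
    Q.contractTriple D δ (t * Algebra.TensorProduct.map (AlgHom.id k B) (appendOne k H H H)
        (Algebra.TensorProduct.map (AlgHom.id k B) Q.comul (R.coact b))) =
      Q.contractTriple D δ (t * (b ⊗ₜ 1)) := by
  rw [← R.map_counitOne_coact, ← AlgHom.comp_apply, ← Algebra.TensorProduct.map_id_comp]
  exact tensorMul_mul_map_congr (fun _ _ => rfl)
    (fun u h => by
      simp [Q.antipodeTriple_mul_appendOne_comul, QuasiBialgebra.counitOne_apply]) t _

lemma contractTriple_map_comul_PhiRhoInv_mul (D : B →ₗ[k] A) (δ : H →ₐ[k] A)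
    (t : B ⊗[k] (H ⊗[k] (H ⊗[k] H))) :
    Q.contractTriple D δ (Algebra.TensorProduct.map (AlgHom.id k B)
        (Algebra.TensorProduct.map (AlgHom.id k H) Q.comul) R.PhiRhoInv * t) =
      Q.contractTriple D δ t := by
  have collapse : Algebra.TensorProduct.map (AlgHom.id k B) (Algebra.TensorProduct.map
      (AlgHom.id k H) (Q.counitOne (H ⊗[k] H))) R.PhiRhoInv = 1 := by
    apply R.map_PhiRhoInv_eq_one
    rw [QuasiBialgebra.counitOne, Algebra.TensorProduct.map_id_comp,
      Algebra.TensorProduct.map_id_comp, AlgHom.comp_apply, R.counit_PhiRho_right, map_one]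
  conv_rhs => rw [← one_mul t, ← collapse]
  exact tensorMul_map_mul_congr (fun _ _ => rfl)
    (fun u w => congrArg δ (Q.antipodeTriple_map_comul_mul u w)) t _

lemma contractTriple_mul_map_comul_PhiRho (D : B →ₗ[k] A) (δ : H →ₐ[k] A)
    (t : B ⊗[k] (H ⊗[k] (H ⊗[k] H))) :
    Q.contractTriple D δ (t * Algebra.TensorProduct.map (AlgHom.id k B)
        ((Algebra.TensorProduct.assoc k k k H H H).toAlgHom.comp
          (Algebra.TensorProduct.map Q.comul (AlgHom.id k H))) R.PhiRho) =
      Q.contractTriple D δ t := by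
  have collapse : Algebra.TensorProduct.map (AlgHom.id k B)
      ((Algebra.TensorProduct.assoc k k k H H H).toAlgHom.comp (Algebra.TensorProduct.map
        (Q.counitOne (H ⊗[k] H)) (AlgHom.id k H))) R.PhiRho = 1 := by
    rw [QuasiBialgebra.counitOne, ← AlgHom.id_comp (AlgHom.id k H),
      Algebra.TensorProduct.map_comp, Algebra.TensorProduct.map_id_comp,
      Algebra.TensorProduct.map_id_comp, AlgHom.comp_apply, AlgHom.comp_apply,
      R.counit_PhiRho_mid, map_one, map_one]
  conv_rhs => rw [← mul_one t, ← collapse]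
  exact tensorMul_mul_map_congr (fun _ _ => rfl)
    (fun u w => congrArg δ (Q.antipodeTriple_mul_comul_map u w)) t _

variable {R} {v : H →ₐ[k] B} {D : B →ₗ[k] A}

lemma contractTriple_mul_map_appendOne_PhiRho (hv : IsComodAlgMorphismFromH R v)
    (hD : ∀ b h, D (b * v h) = Q.counit h • D b) (δ : H →ₐ[k] A)
    (t : B ⊗[k] (H ⊗[k] (H ⊗[k] H))) :
    Q.contractTriple D δ (t *
        Algebra.TensorProduct.map (AlgHom.id k B) (appendOne k H H H) R.PhiRho) =
      Q.contractTriple D δ t := by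
  rw [hv.2, ← AlgHom.comp_apply, ← Algebra.TensorProduct.map_comp, AlgHom.id_comp, AlgHom.comp_id]
  exact Q.tensorMul_mul_map_eq hD _ (Q.map_counitOne_Phi _) t

theorem project_convolve (hv : IsComodAlgMorphismFromH R v)
    (hD : ∀ b h, D (b * v h) = Q.counit h • D b) (δ : H →ₐ[k] A) :
    R.project (R.convolve D δ) δ = D := by
  ext b
  set j := Algebra.TensorProduct.map (AlgHom.id k B) (appendOne k H H H)
  have conjugate : R.coactTensor (H ⊗[k] H) (appendOne k B H H (R.coact b)) =
      j R.PhiRhoInv * j (Algebra.TensorProduct.map (AlgHom.id k B) Q.comul (R.coact b)) *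
        j R.PhiRho := by
    rw [← map_mul, ← map_mul, R.PhiRhoInv_mul_map_comul_coact, mul_assoc, R.inv_mul_PhiRho,
      mul_one]
    exact R.coactTensor_map _ _
  calc R.project (R.convolve D δ) δ b
      = Q.contractTriple D δ (R.coactTensor (H ⊗[k] H) R.PhiRho * j R.PhiRhoInv *
          j (Algebra.TensorProduct.map (AlgHom.id k B) Q.comul (R.coact b)) * j R.PhiRho) := by
        rw [project_apply, contractPair_convolve, map_mul, conjugate, ← mul_assoc, ← mul_assoc]
    _ = Q.contractTriple (D ∘ₗ LinearMap.mulRight k b) δ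
          (R.coactTensor (H ⊗[k] H) R.PhiRho * j R.PhiRhoInv) := by
        rw [contractTriple_mul_map_appendOne_PhiRho hv hD,
          contractTriple_mul_map_appendOne_comul_coact]
        exact tensorMul_mul_tmul_one _ _
    _ = Q.contractTriple (D ∘ₗ LinearMap.mulRight k b) δ (1 ⊗ₜ Q.Phi) := by
        rw [coactTensor_PhiRho_mul_map_appendOne_PhiRhoInv,
          contractTriple_map_comul_PhiRhoInv_mul, contractTriple_mul_map_comul_PhiRho]
    _ = D b := by simp [Q.antipodeTriple_Phi]

end Reconstruction

section TwistedCoaction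

variable {k H B : Type*} [Field k] [Ring H] [Algebra k H] [Ring B] [Algebra k B]
  {Q : QuasiBialgebra k H} (R : RightComoduleAlgebra Q B) (v : H →ₐ[k] B) (E : B →ₗ[k] B)

/-- The map `b ⊗ h ⊗ g ↦ E(b)v(h) ⊗ g`. -/
noncomputable def twist : B ⊗[k] (H ⊗[k] H) →ₗ[k] B ⊗[k] H :=
  tensorMul (Algebra.TensorProduct.includeLeft.toLinearMap ∘ₗ E)
    (Algebra.TensorProduct.map v (AlgHom.id k H)).toLinearMap

/-- The map `b ↦ E(x¹b)v(x²) ⊗ x³`, where `Φ_ρ⁻¹ = x¹ ⊗ x² ⊗ x³`. -/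
noncomputable def twistedCoact : B →ₗ[k] B ⊗[k] H :=
  twist v E ∘ₗ LinearMap.mulLeft k R.PhiRhoInv ∘ₗ Algebra.TensorProduct.includeLeft.toLinearMap

lemma twistedCoact_apply (b : B) :
    R.twistedCoact v E b = twist v E (R.PhiRhoInv * b ⊗ₜ 1) := rfl

variable {v E}

@[simp]
lemma twist_tmul (b : B) (u : H ⊗[k] H) :
    twist v E (b ⊗ₜ u) = (E b ⊗ₜ 1) * Algebra.TensorProduct.map v (AlgHom.id k H) u :=
  tensorMul_tmul _ _ b u

lemma twist_assoc (t : B ⊗[k] H) (h : H) :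
    twist v E (Algebra.TensorProduct.assoc k k k B H H (t ⊗ₜ h)) =
      tensorMul E v.toLinearMap t ⊗ₜ h := by
  induction t using TensorProduct.induction_on with
  | zero => simp
  | tmul b g => simp
  | add s t hs ht => simp only [TensorProduct.add_tmul, map_add, hs, ht]

lemma twist_coactTensor (hE : R.convolve E v = LinearMap.id) (t : B ⊗[k] H) :
    twist v E (R.coactTensor H t) = t := by
  induction t using TensorProduct.induction_on with
  | zero => simp
  | tmul b h => rw [coactTensor_tmul, twist_assoc, ← convolve_apply, hE, LinearMap.id_apply]
  | add s t hs ht => simp only [map_add, hs, ht]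

lemma PhiRhoInv_eq_map (hv : IsComodAlgMorphismFromH R v) :
    R.PhiRhoInv = Algebra.TensorProduct.map v (AlgHom.id k (H ⊗[k] H)) Q.PhiInv := by
  refine left_inv_eq_right_inv R.inv_mul_PhiRho ?_
  rw [hv.2, ← map_mul, Q.Phi_mul_inv, map_one]

lemma twistedCoact_eq_sum (hv : IsComodAlgMorphismFromH R v) (b : B) {n : ℕ}
    {x1 x2 x3 : Fin n → H} (hx : Q.PhiInv = ∑ i, x1 i ⊗ₜ[k] (x2 i ⊗ₜ[k] x3 i)) :
    R.twistedCoact v E b = ∑ i, (E (v (x1 i) * b) * v (x2 i)) ⊗ₜ[k] x3 i := by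
  simp [twistedCoact_apply, R.PhiRhoInv_eq_map hv, hx, Finset.sum_mul]

lemma tensorMul_twistedCoact (hv : IsComodAlgMorphismFromH R v) (t : B ⊗[k] H) :
    tensorMul (R.twistedCoact v E) (R.coact.comp v).toLinearMap t =
      twist v E (R.PhiRhoInv * Algebra.TensorProduct.map (AlgHom.id k B) Q.comul t) := by
  induction t using TensorProduct.induction_on with
  | zero => simp
  | tmul b h =>
    have split : b ⊗ₜ[k] Q.comul h = b ⊗ₜ 1 * 1 ⊗ₜ Q.comul h := by simp
    rw [tensorMul_tmul, AlgHom.toLinearMap_apply, AlgHom.comp_apply, hv.1,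
      Algebra.TensorProduct.map_tmul, AlgHom.id_apply, split, ← mul_assoc]
    exact (tensorMul_mul_one_tmul _ _ _).symm
  | add s t hs ht => simp only [map_add, mul_add, hs, ht]

variable (hE : ∀ b h, E (b * v h) = Q.counit h • E b)
include hE

lemma twist_mul_tmul_one (t : B ⊗[k] (H ⊗[k] H)) (h : H) :
    twist v E (t * (v h ⊗ₜ 1)) = Q.counit h • twist v E t := by
  induction t using TensorProduct.induction_on with
  | zero => simp
  | tmul b u => simp [hE, ← TensorProduct.smul_tmul']
  | add s t hs ht => simp only [add_mul, map_add, smul_add, hs, ht]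

lemma twistedCoact_mul (b : B) (h : H) :
    R.twistedCoact v E (b * v h) = Q.counit h • R.twistedCoact v E b := by
  have split : (b * v h) ⊗ₜ[k] (1 : H ⊗[k] H) = b ⊗ₜ 1 * v h ⊗ₜ 1 := by simp
  rw [twistedCoact_apply, split, ← mul_assoc, twist_mul_tmul_one hE, twistedCoact_apply]

lemma twist_mul_PhiRhoInv (hv : IsComodAlgMorphismFromH R v) (t : B ⊗[k] (H ⊗[k] H)) :
    twist v E (t * R.PhiRhoInv) = twist v E t := by
  rw [R.PhiRhoInv_eq_map hv]
  exact Q.tensorMul_mul_map_eq (fun b h => by simp [hE, TensorProduct.smul_tmul']) _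
    (Q.map_PhiInv_eq_one (Q.map_counitOne_Phi _)) t

lemma convolve_twistedCoact (hv : IsComodAlgMorphismFromH R v)
    (hconv : R.convolve E v = LinearMap.id) :
    R.convolve (R.twistedCoact v E) (R.coact.comp v) = R.coact.toLinearMap := by
  ext b
  rw [convolve_apply, R.tensorMul_twistedCoact hv, PhiRhoInv_mul_map_comul_coact,
    R.twist_mul_PhiRhoInv hE hv, R.twist_coactTensor hconv, AlgHom.toLinearMap_apply]

end TwistedCoaction

section CanonicalProjection

variable {k H B : Type*} [Field k] [Ring H] [Algebra k H] [Ring B] [Algebra k B]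
  {Q : QuasiHopfAlgebra k H} {R : RightComoduleAlgebra Q.toQuasiBialgebra B} {v : H →ₐ[k] B}

lemma eq_project_of_isCanonicalProjection (hv : IsComodAlgMorphismFromH R v) {E : B →ₗ[k] B}
    (hE : IsCanonicalProjection Q R v E) : E = R.project LinearMap.id v := by
  ext b
  obtain ⟨n, X1, X2, X3, hX⟩ := exists_sum_tmul_tmul_eq Q.Phi
  obtain ⟨p, b0, b1, hb⟩ := TensorProduct.exists_sum_tmul_eq (R.coact b)
  rw [hE b n X1 X2 X3 hX p b0 b1 hb, project_apply, hv.2, hX, hb, Finset.sum_comm]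
  simp [Finset.sum_mul, Finset.mul_sum, Q.S_mul, Q.S_Sinv, mul_assoc]

theorem coact_project (hv : IsComodAlgMorphismFromH R v) (b : B) :
    R.coact (R.project LinearMap.id v b) = R.twistedCoact v (R.project LinearMap.id v) b := by
  have invariant := project_mul (F := LinearMap.id) (δ := v) hv fun _ _ => rfl
  have convolution := convolve_project (F := LinearMap.id) (δ := v) hv fun _ _ => rfl
  calc R.coact (R.project LinearMap.id v b)
      = R.project R.coact.toLinearMap (R.coact.comp v) b := R.map_project R.coact _ v b
    _ = R.project (R.convolve (R.twistedCoact v (R.project LinearMap.id v)) (R.coact.comp v))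
          (R.coact.comp v) b := by
        rw [R.convolve_twistedCoact invariant hv convolution]
    _ = R.twistedCoact v (R.project LinearMap.id v) b := by
        rw [project_convolve hv (R.twistedCoact_mul invariant)]

end CanonicalProjection

end RightComoduleAlgebra

/-- `E(b) = b` if and only if `ρ(b) = (x¹ ▷ b)v(x²) ⊗ x³`. -/
theorem statement14 {k H B : Type*} [Field k] [Ring H] [Algebra k H]
    [Ring B] [Algebra k B] (Q : QuasiHopfAlgebra k H)
    (R : RightComoduleAlgebra Q.toQuasiBialgebra B)
    (v : H →ₐ[k] B) (hv : IsComodAlgMorphismFromH R v)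
    (E : B →ₗ[k] B) (hE : IsCanonicalProjection Q R v E) :
    ∀ (b : B) (n : ℕ) (x1 x2 x3 : Fin n → H),
      Q.PhiInv = ∑ i, x1 i ⊗ₜ[k] (x2 i ⊗ₜ[k] x3 i) →
      (E b = b ↔ R.coact b = ∑ i, (E (v (x1 i) * b) * v (x2 i)) ⊗ₜ[k] x3 i) := by
  intro b n x1 x2 x3 hx
  have coact_E : R.coact (E b) = R.twistedCoact v E b := by
    rw [RightComoduleAlgebra.eq_project_of_isCanonicalProjection hv hE]
    exact RightComoduleAlgebra.coact_project hv b
  rw [← R.twistedCoact_eq_sum hv b hx, ← coact_E, R.coact_injective.eq_iff, eq_comm]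
end
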